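/- Let d ≥ 2 be an integer, let h = (h₁,…,h_d) satisfy 0 < h₁ ≤ ⋯ ≤ h_d ≤ 1, and let p ∈ P_h. Then sup_{t ≥ 0} |p''(t)| ≤ ((16d² − 24d + 11)/3) · sup_{t ≥ 0} |p(t)|. -/

import Mathlib

/-- The sup of `|p|` over the half-line `[0, ∞)`. -/
noncomputable def supAbs (p : ℝ → ℝ) : ℝ :=
  sSup ((fun t => |p t|) '' Set.Ici (0 : ℝ))

/-- The space `P_h` of exponential polynomials with exponents `h₁ ≤ ⋯ ≤ h_d`:
the span of the functions `t^m * exp (-h i * t)`, where `m` is the number of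
indices `j < i` with `h j = h i`. -/
def expPoly (d : ℕ) (h : Fin d → ℝ) : Set (ℝ → ℝ) :=
  {p | ∃ c : Fin d → ℝ, ∀ t : ℝ,
      p t = ∑ i : Fin d,
        c i * t ^ (Nat.card {j : Fin d // j < i ∧ h j = h i}) * Real.exp (-(h i) * t)}

/-!
The space `P_h` is the kernel of `∏ (D + hᵢ)`, which is a disconjugate operator: Rolle's theorem
bounds the number of zeros of its solutions, so that solutions can be interpolated at `d` points.

Fix nodes `t₀ < ⋯ < t_n` with `n = d - 1`. Counting zeros shows that, among the `p` in the kernel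
with `|p (tᵢ)| ≤ 1`, all derivatives at `t₀` are largest in absolute value for the `v` with
`v (tᵢ) = (-1)ⁱ`. Counting zeros again shows that these extremal derivatives grow when one of the
exponents is increased, so all exponents may be replaced by `1`.

It remains to find nodes starting at `0` and a `u` in the kernel of `(D + 1)ᵈ` with
`(-1)ⁱ u (tᵢ) ≥ 1` and `u''(0)` known. The function `u x = L_n^(-1/2)(2x) exp (-x) / L_n^(-1/2)(0)`
works: Rodrigues' formula provides `n` sign changes, and Sonin's monotone energy shows that the
local extrema of `u` on `(0, ∞)` are at least `u 0 = 1` in absolute value. A translation carries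
the estimate from `0` to an arbitrary point of the half-line.
-/

namespace MarkovBernstein

open Filter Polynomial Topology
open scoped ContDiff

/-! ### Zeros and sign changes on a half-line -/

theorem exists_isLocalMax_Ioo_of_lt {f : ℝ → ℝ} (hf : Continuous f) {a m b : ℝ} (ham : a < m)
    (hmb : m < b) (hfa : f a < f m) (hfb : f b < f m) :
    ∃ s ∈ Set.Ioo a b, f m ≤ f s ∧ IsLocalMax f s := by
  obtain ⟨s, hs, hmax⟩ := isCompact_Icc.exists_isMaxOn (Set.nonempty_Icc.2 (ham.trans hmb).le)
    hf.continuousOn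
  have hms : f m ≤ f s := hmax ⟨ham.le, hmb.le⟩
  have has : a < s := hs.1.lt_of_ne (by rintro rfl; linarith)
  have hsb : s < b := hs.2.lt_of_ne (by rintro rfl; linarith)
  exact ⟨s, ⟨has, hsb⟩, hms, hmax.isLocalMax (Icc_mem_nhds has hsb)⟩

theorem exists_isLocalMax_Ioi_of_tendsto {f : ℝ → ℝ} (hf : Continuous f) {z m l : ℝ}
    (hlim : Tendsto f atTop (𝓝 l)) (hz : f z = l) (hzm : z < m) (hm : l < f m) :
    ∃ s ∈ Set.Ioi z, IsLocalMax f s := by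
  obtain ⟨b, hfb, hmb⟩ := ((hlim.eventually_lt_const hm).and (eventually_gt_atTop m)).exists
  obtain ⟨s, hs, -, hmax⟩ := exists_isLocalMax_Ioo_of_lt hf hzm hmb (hz.trans_lt hm) hfb
  exact ⟨s, hs.1, hmax⟩

theorem exists_isLocalExtr_Ioi_of_tendsto {f : ℝ → ℝ} (hf : Continuous f) {z l : ℝ}
    (hlim : Tendsto f atTop (𝓝 l)) (hz : f z = l) : ∃ s ∈ Set.Ioi z, IsLocalExtr f s := by
  by_cases hconst : ∀ m ∈ Set.Ioi z, f m = l
  · have hz1 : z + 1 ∈ Set.Ioi z := lt_add_one z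
    refine ⟨z + 1, hz1, .inl ?_⟩
    filter_upwards [isOpen_Ioi.mem_nhds hz1] with x hx
    rw [hconst x hx, hconst _ hz1]
  · push Not at hconst
    obtain ⟨m, hzm, hm⟩ := hconst
    rcases hm.lt_or_gt with hm | hm
    · obtain ⟨s, hs, hmax⟩ := exists_isLocalMax_Ioi_of_tendsto (f := fun x => -f x) hf.neg hlim.neg
        (neg_inj.2 hz) hzm (neg_lt_neg hm)
      have hmin : IsLocalMin f s := by simpa using hmax.neg
      exact ⟨s, hs, .inl hmin⟩
    · obtain ⟨s, hs, hmax⟩ := exists_isLocalMax_Ioi_of_tendsto hf hlim hz hzm hm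
      exact ⟨s, hs, .inr hmax⟩

theorem exists_hasDerivAt_neg_of_lt {f f' : ℝ → ℝ} {a b : ℝ} (hf : ContinuousOn f (Set.Icc a b))
    (hf' : ∀ x ∈ Set.Ioo a b, HasDerivAt f (f' x) x) (hab : a < b) (hfab : f b < f a) :
    ∃ y ∈ Set.Ioo a b, f' y < 0 := by
  obtain ⟨y, hy, hslope⟩ := exists_hasDerivAt_eq_slope f f' hab hf hf'
  exact ⟨y, hy, hslope ▸ div_neg_of_neg_of_pos (sub_neg.2 hfab) (sub_pos.2 hab)⟩

/-- `f` has at least `k` zeros in `(c, ∞)`, enumerated recursively from the left so that Rolle-type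
arguments become inductions on `k`. -/
def HasZerosAfter (f : ℝ → ℝ) : ℝ → ℕ → Prop
  | _, 0 => True
  | c, k + 1 => ∃ z, c < z ∧ f z = 0 ∧ HasZerosAfter f z k

namespace HasZerosAfter

variable {f : ℝ → ℝ} {c : ℝ} {k : ℕ}

theorem mono {c' : ℝ} (hf : HasZerosAfter f c k) (hc : c' ≤ c) : HasZerosAfter f c' k := by
  cases k with
  | zero => trivial
  | succ k =>
    obtain ⟨z, hcz, hz, hk⟩ := hf
    exact ⟨z, hc.trans_lt hcz, hz, hk⟩

theorem const_smul (hf : HasZerosAfter f c k) (r : ℝ) : HasZerosAfter (r • f) c k := by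
  induction k generalizing c with
  | zero => trivial
  | succ k ih =>
    obtain ⟨z, hcz, hz, hk⟩ := hf
    exact ⟨z, hcz, by simp [hz], ih hk⟩

theorem of_finset (T : Finset ℝ) (hT : ∀ z ∈ T, c < z ∧ f z = 0) :
    HasZerosAfter f c T.card := by
  induction T using Finset.induction_on_min generalizing c with
  | empty => trivial
  | insert a T hmin ih =>
    rw [Finset.card_insert_of_notMem fun ha => (hmin a ha).false]
    obtain ⟨hca, hfa⟩ := hT a (Finset.mem_insert_self a T)
    exact ⟨a, hca, hfa, ih fun z hz => ⟨hmin z hz, (hT z (Finset.mem_insert_of_mem hz)).2⟩⟩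

theorem of_nodes {t : ℕ → ℝ} {n : ℕ} (ht : StrictMonoOn t (Set.Iic n))
    (hf : ∀ i ≤ n, f (t i) = 0) : HasZerosAfter f (t 0) n := by
  have hinj : Set.InjOn t (Finset.Ioc 0 n) :=
    ht.injOn.mono fun i hi => (Finset.mem_Ioc.1 hi).2
  have hzeros := of_finset (f := f) (c := t 0) ((Finset.Ioc 0 n).image t) fun z hz => by
    obtain ⟨i, hi, rfl⟩ := Finset.mem_image.1 hz
    obtain ⟨hi0, hin⟩ := Finset.mem_Ioc.1 hi
    exact ⟨ht (Set.mem_Iic.2 n.zero_le) hin hi0, hf i hin⟩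
  rwa [Finset.card_image_of_injOn hinj, Nat.card_Ioc, tsub_zero] at hzeros

end HasZerosAfter

/-- `f` is alternately positive and negative at the nodes `t 0 < t 1 < ⋯ < t n`, starting with a
positive value; the values `t i` with `n < i` are irrelevant. -/
structure AlternatesAt (f : ℝ → ℝ) (t : ℕ → ℝ) (n : ℕ) : Prop where
  strictMonoOn : StrictMonoOn t (Set.Iic n)
  pos : ∀ i ≤ n, 0 < (-1) ^ i * f (t i)

namespace AlternatesAt

variable {f : ℝ → ℝ} {t : ℕ → ℝ} {n : ℕ}

theorem congr {g : ℝ → ℝ} (hf : AlternatesAt f t n) (hfg : ∀ i ≤ n, g (t i) = f (t i)) :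
    AlternatesAt g t n :=
  ⟨hf.strictMonoOn, fun i hi => by rw [hfg i hi]; exact hf.pos i hi⟩

theorem pos_zero (hf : AlternatesAt f t n) : 0 < f (t 0) := by
  simpa using hf.pos 0 n.zero_le

theorem tail (hf : AlternatesAt f t (n + 1)) : AlternatesAt (-f) (fun i => t (i + 1)) n where
  strictMonoOn i hi j hj hij :=
    hf.strictMonoOn (Nat.succ_le_succ hi) (Nat.succ_le_succ hj) (Nat.succ_lt_succ hij)
  pos i hi := by simpa [pow_succ] using hf.pos (i + 1) (Nat.succ_le_succ hi)

theorem hasZerosAfter (hf : Continuous f) (hft : AlternatesAt f t n) :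
    HasZerosAfter f (t 0) n := by
  induction n generalizing f t with
  | zero => trivial
  | succ n ih =>
    have ht : t 0 < t 1 := hft.strictMonoOn (by simp) (by simp) one_pos
    have hpos : 0 < f (t 0) := hft.pos_zero
    have hneg : f (t 1) < 0 := by simpa using hft.tail.pos_zero
    obtain ⟨z, hz, hfz⟩ := intermediate_value_Ioo' ht.le hf.continuousOn ⟨hneg, hpos⟩
    have hrest := (ih hf.neg hft.tail).const_smul (-1)
    rw [neg_one_smul, neg_neg] at hrest
    exact ⟨z, hz.1, hfz, hrest.mono hz.2.le⟩

end AlternatesAt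

/-- There are `k` successive points in `(c, ∞)` at which `f, -f, f, …` take values in `S`. With
`S = Set.Ioi 0` these are sign alternations, with `S = Set.Ici 1` alternations of size at
least `1`. -/
def AlternatesAfter (S : Set ℝ) : (ℝ → ℝ) → ℝ → ℕ → Prop
  | _, _, 0 => True
  | f, c, k + 1 => ∃ z, c < z ∧ f z ∈ S ∧ AlternatesAfter S (-f) z k

namespace AlternatesAfter

variable {S : Set ℝ} {f : ℝ → ℝ} {c : ℝ} {k : ℕ}

theorem mono {c' : ℝ} (hf : AlternatesAfter S f c k) (hc : c' ≤ c) :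
    AlternatesAfter S f c' k := by
  cases k with
  | zero => trivial
  | succ k =>
    obtain ⟨z, hcz, hz, hk⟩ := hf
    exact ⟨z, hc.trans_lt hcz, hz, hk⟩

theorem congr_sign {g : ℝ → ℝ} (hf : AlternatesAfter (Set.Ioi 0) f c k)
    (hfg : ∀ x > c, SignType.sign (f x) = SignType.sign (g x)) :
    AlternatesAfter (Set.Ioi 0) g c k := by
  induction k generalizing f g c with
  | zero => trivial
  | succ k ih =>
    obtain ⟨z, hcz, hz, hk⟩ := hf
    refine ⟨z, hcz, ?_, ih hk fun x hx => ?_⟩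
    · rw [Set.mem_Ioi, ← sign_eq_one_iff, ← hfg z hcz]
      exact sign_eq_one_iff.2 hz
    · simp only [Pi.neg_apply, Left.sign_neg, hfg x (hcz.trans hx)]

theorem exists_nodes (hf : AlternatesAfter S f c k) :
    ∃ t : ℕ → ℝ, t 0 = c ∧ StrictMonoOn t (Set.Iic k) ∧
      ∀ i < k, (-1) ^ i * f (t (i + 1)) ∈ S := by
  induction k generalizing f c with
  | zero => exact ⟨fun _ => c, rfl, by simp [StrictMonoOn], by simp⟩
  | succ k ih =>
    obtain ⟨z, hcz, hz, hk⟩ := hf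
    obtain ⟨t, rfl, ht, hft⟩ := ih hk
    refine ⟨fun i => i.casesOn c t, rfl, ?_, ?_⟩
    · refine strictMonoOn_Iic_of_lt_succ fun i hi => ?_
      cases i with
      | zero => exact hcz
      | succ i =>
        exact ht (Set.mem_Iic.2 (by omega)) (Set.mem_Iic.2 (by omega)) i.lt_succ_self
    · rintro (_ | i) hi
      · simpa using hz
      · simpa [pow_succ] using hft i (by omega)

theorem deriv_of_pos {f' : ℝ → ℝ} (hf : Continuous f) (hlim : Tendsto f atTop (𝓝 0))
    (hf' : ∀ x > c, HasDerivAt f (f' x) x) (hc : 0 < f c)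
    (halt : AlternatesAfter (Set.Ioi 0) (-f) c k) :
    AlternatesAfter (Set.Ioi 0) (-f') c (k + 1) := by
  induction k generalizing f f' c with
  | zero =>
    obtain ⟨b, hb, hcb⟩ := ((hlim.eventually_lt_const hc).and (eventually_gt_atTop c)).exists
    obtain ⟨y, hy, hneg⟩ := exists_hasDerivAt_neg_of_lt hf.continuousOn
      (fun x hx => hf' x hx.1) hcb hb
    exact ⟨y, hy.1, neg_pos.2 hneg, trivial⟩
  | succ k ih =>
    obtain ⟨z, hcz, hz, hk⟩ := halt
    obtain ⟨y, hy, hneg⟩ := exists_hasDerivAt_neg_of_lt hf.continuousOn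
      (fun x hx => hf' x hx.1) hcz ((neg_pos.1 hz).trans hc)
    have hlim' : Tendsto (-f) atTop (𝓝 0) := neg_zero (G := ℝ) ▸ hlim.neg
    have hrest := ih hf.neg hlim' (fun x hx => (hf' x (hcz.trans hx)).neg) hz hk
    exact ⟨y, hy.1, neg_pos.2 hneg, hrest.mono hy.2.le⟩

theorem deriv_of_eq_zero {f' : ℝ → ℝ} (hf : Continuous f) (hlim : Tendsto f atTop (𝓝 0))
    (hf' : ∀ x > c, HasDerivAt f (f' x) x) (hc : f c = 0)
    (halt : AlternatesAfter (Set.Ioi 0) f c (k + 1)) :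
    AlternatesAfter (Set.Ioi 0) f' c (k + 2) := by
  obtain ⟨z, hcz, hz, hk⟩ := halt
  obtain ⟨y, hy, hneg⟩ := exists_hasDerivAt_neg_of_lt hf.neg.continuousOn
    (fun x hx => (hf' x hx.1).neg) hcz (by simpa [hc] using hz)
  have hrest := hk.deriv_of_pos hf hlim (fun x hx => hf' x (hcz.trans hx)) hz
  exact ⟨y, hy.1, by simpa using hneg, hrest.mono hy.2.le⟩

theorem of_isLocalMax (hf : Continuous f) (hlim : Tendsto f atTop (𝓝 0)) {c₀ : ℝ} (hc₀ : c₀ ≤ c)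
    (hmax : ∀ s > c₀, IsLocalMax f s → 0 < f s → f s ∈ S)
    (hmin : ∀ s > c₀, IsLocalMax (-f) s → 0 < (-f) s → (-f) s ∈ S) (hc : f c ≤ 0)
    (halt : AlternatesAfter (Set.Ioi 0) f c k) : AlternatesAfter S f c k := by
  induction k generalizing f c with
  | zero => trivial
  | succ k ih =>
    obtain ⟨z, hcz, hz : 0 < f z, hk⟩ := halt
    have hlim' : Tendsto (-f) atTop (𝓝 0) := neg_zero (G := ℝ) ▸ hlim.neg
    obtain ⟨b, hzb, hb, hb', hkb⟩ : ∃ b > z, f b < f z ∧ (k ≠ 0 → f b = 0) ∧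
        AlternatesAfter (Set.Ioi 0) (-f) b k := by
      cases k with
      | zero =>
        obtain ⟨b, hb, hzb⟩ := ((hlim.eventually_lt_const hz).and (eventually_gt_atTop z)).exists
        exact ⟨b, hzb, hb, by simp, trivial⟩
      | succ k =>
        obtain ⟨w, hzw, hw, hk⟩ := hk
        obtain ⟨b, hb, hfb⟩ := intermediate_value_Ioo' hzw.le hf.continuousOn ⟨neg_pos.1 hw, hz⟩
        exact ⟨b, hb.1, hfb.trans_lt hz, fun _ => hfb, w, hb.2, hw, hk⟩
    obtain ⟨s, hs, hzs, hsmax⟩ := exists_isLocalMax_Ioo_of_lt hf hcz hzb (hc.trans_lt hz) hb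
    have hrest : AlternatesAfter S (-f) b k := by
      rcases eq_or_ne k 0 with rfl | hk0
      · trivial
      · exact ih hf.neg hlim' (hc₀.trans (hcz.trans hzb).le) hmin (by simpa using hmax)
          (by simp [hb' hk0]) hkb
    exact ⟨s, hs.1, hmax s (hc₀.trans_lt hs.1) hsmax (hz.trans_le hzs), hrest.mono hs.2.le⟩

end AlternatesAfter

/-! ### Constant-coefficient differential operators on smooth functions -/

/-- The algebra of smooth functions on the real line, the domain on which `D` and the operators
`diffOp s` act as endomorphisms. -/
def smoothFunctions : Subalgebra ℝ (ℝ → ℝ) where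
  carrier := {f | ContDiff ℝ ∞ f}
  mul_mem' {_ _} (hf : ContDiff ℝ ∞ _) (hg : ContDiff ℝ ∞ _) := hf.mul hg
  add_mem' {_ _} (hf : ContDiff ℝ ∞ _) (hg : ContDiff ℝ ∞ _) := hf.add hg
  algebraMap_mem' r := show ContDiff ℝ ∞ fun _ => r from contDiff_const

instance : CoeFun smoothFunctions fun _ => ℝ → ℝ := ⟨Subtype.val⟩

theorem contDiff_coe (f : smoothFunctions) : ContDiff ℝ ∞ f := f.2

theorem differentiable_coe (f : smoothFunctions) : Differentiable ℝ f :=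
  (contDiff_coe f).differentiable (by simp)

/-- Differentiation of smooth functions. -/
noncomputable def D : Module.End ℝ smoothFunctions where
  toFun f := ⟨deriv f, (contDiff_infty_iff_deriv.1 (contDiff_coe f)).2⟩
  map_add' f g := Subtype.ext <| funext fun x =>
    deriv_add (differentiable_coe f x) (differentiable_coe g x)
  map_smul' r f := Subtype.ext <| funext fun x => deriv_const_smul r (differentiable_coe f x)

section Smooth

variable (f g : smoothFunctions) (a c x : ℝ) (s : Multiset ℝ) (k : ℕ)

theorem add_apply : (f + g) x = f x + g x := rfl

theorem sub_apply : (f - g) x = f x - g x := rfl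

theorem neg_apply : (-f) x = -f x := rfl

theorem mul_apply : (f * g) x = f x * g x := rfl

theorem smul_apply : (a • f) x = a * f x := rfl

theorem zero_apply : (0 : smoothFunctions) x = 0 := rfl

theorem hasDerivAt_coe : HasDerivAt f (D f x) x :=
  (differentiable_coe f x).hasDerivAt

theorem continuous_coe : Continuous f := (contDiff_coe f).continuous

theorem D_eq_of_hasDerivAt {f g : smoothFunctions} (h : ∀ x, HasDerivAt f (g x) x) : D f = g :=
  Subtype.ext <| funext fun x => (h x).deriv

theorem D_mul : D (f * g) = D f * g + f * D g :=
  D_eq_of_hasDerivAt fun x => (hasDerivAt_coe f x).mul (hasDerivAt_coe g x)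

theorem coe_D_pow : ((D ^ k) f : ℝ → ℝ) = iteratedDeriv k f := by
  rw [iteratedDeriv_eq_iterate]
  induction k with
  | zero => rfl
  | succ k ih => rw [pow_succ', Function.iterate_succ', Function.comp_apply, ← ih]; rfl

/-- The differential operator `∏ (D + a)` over the members `a` of `s`. Its kernel is the space of
exponential polynomials with exponents `s`. -/
noncomputable def diffOp (s : Multiset ℝ) : Module.End ℝ smoothFunctions :=
  aeval D (s.map fun a => X + C a).prod

@[simp]
theorem diffOp_zero : diffOp 0 f = f := by simp [diffOp]

theorem diffOp_cons : diffOp (a ::ₘ s) f = D (diffOp s f) + a • diffOp s f := by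
  simp [diffOp]

theorem diffOp_cons' : diffOp (a ::ₘ s) f = diffOp s (D f + a • f) := by
  simp [diffOp, mul_comm (X + C a)]

theorem diffOp_D_pow : diffOp s ((D ^ k) f) = (D ^ k) (diffOp s f) := by
  have hD : D ^ k = aeval D (X ^ k : ℝ[X]) := by simp
  rw [hD, diffOp, ← Module.End.mul_apply, ← Module.End.mul_apply, ← map_mul, ← map_mul, mul_comm]

/-- The translate `x ↦ f (x + c)`. -/
def translate (c : ℝ) (f : smoothFunctions) : smoothFunctions :=
  ⟨fun x => f (x + c), (contDiff_coe f).comp (contDiff_id.add contDiff_const)⟩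

theorem D_translate : D (translate c f) = translate c (D f) :=
  D_eq_of_hasDerivAt fun x => (hasDerivAt_coe f (x + c)).comp_add_const x c

theorem D_pow_translate : (D ^ k) (translate c f) = translate c ((D ^ k) f) := by
  induction k with
  | zero => rfl
  | succ k ih => simp only [pow_succ', Module.End.mul_apply, ih, D_translate]

theorem diffOp_translate : diffOp s (translate c f) = translate c (diffOp s f) := by
  induction s using Multiset.induction_on with
  | empty => simp
  | cons a s ih => rw [diffOp_cons, diffOp_cons, ih, D_translate]; rfl

theorem hasDerivAt_exp_mul :
    HasDerivAt (fun x => Real.exp (a * x) * f x) (Real.exp (a * x) * (D f + a • f) x) x := by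
  have hexp : HasDerivAt (fun x => Real.exp (a * x)) (Real.exp (a * x) * a) x := by
    simpa using ((hasDerivAt_id x).const_mul a).exp
  refine (hexp.mul (hasDerivAt_coe f x)).congr_deriv ?_
  rw [add_apply, smul_apply]
  ring

theorem antitoneOn_exp_mul {I : Set ℝ} (hI : Convex ℝ I) (h : ∀ x ∈ I, (D f + a • f) x ≤ 0) :
    AntitoneOn (fun x => Real.exp (a * x) * f x) I :=
  antitoneOn_of_hasDerivWithinAt_nonpos hI
    (fun x _ => (hasDerivAt_exp_mul f a x).continuousAt.continuousWithinAt)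
    (fun x _ => (hasDerivAt_exp_mul f a x).hasDerivWithinAt)
    fun x hx => mul_nonpos_of_nonneg_of_nonpos (Real.exp_nonneg _) (h x (interior_subset hx))

end Smooth

/-! ### Rolle's theorem for differential operators -/

section Rolle

variable {f : smoothFunctions} {c x y : ℝ} {s : Multiset ℝ} {k : ℕ}

theorem exists_D_add_smul_eq_zero (a : ℝ) (hxy : x < y) (hx : f x = 0) (hy : f y = 0) :
    ∃ z ∈ Set.Ioo x y, (D f + a • f) z = 0 := by
  obtain ⟨z, hz, h⟩ := exists_hasDerivAt_eq_zero hxy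
    (fun x _ => (hasDerivAt_exp_mul f a x).continuousAt.continuousWithinAt) (by simp [hx, hy])
    fun x _ => hasDerivAt_exp_mul f a x
  exact ⟨z, hz, (mul_eq_zero.1 h).resolve_left (Real.exp_ne_zero _)⟩

theorem HasZerosAfter.D_add_smul (a : ℝ) (hc : f c = 0) (hf : HasZerosAfter f c k) :
    HasZerosAfter (D f + a • f) c k := by
  induction k generalizing c with
  | zero => trivial
  | succ k ih =>
    obtain ⟨z, hcz, hz, hk⟩ := hf
    obtain ⟨w, hw, hfw⟩ := exists_D_add_smul_eq_zero a hcz hc hz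
    exact ⟨w, hw.1, hfw, (ih hz hk).mono hw.2.le⟩

theorem HasZerosAfter.diffOp (hf : HasZerosAfter f c (k + s.card + 1)) :
    HasZerosAfter (diffOp s f) c (k + 1) := by
  induction s using Multiset.induction_on generalizing f with
  | empty => simpa using hf
  | cons a s ih =>
    rw [Multiset.card_cons] at hf
    obtain ⟨z, hcz, hz, hk⟩ := hf
    rw [diffOp_cons']
    exact ih ((hk.D_add_smul a hz).mono hcz.le)

theorem nonneg_of_diffOp_nonneg (h : ∀ x ≥ c, 0 ≤ (-1) ^ s.card * diffOp s f x)
    (hf : HasZerosAfter f c s.card) : 0 ≤ f c := by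
  induction s using Multiset.induction_on generalizing f c with
  | empty => simpa using h c le_rfl
  | cons a s ih =>
    rw [Multiset.card_cons] at h hf
    obtain ⟨z, hcz, hz, hk⟩ := hf
    have hneg : ∀ x ∈ Set.Icc c z, (D f + a • f) x ≤ 0 := fun x hx => by
      have hzeros := ((hk.D_add_smul a hz).const_smul (-1)).mono hx.2
      have := ih (f := (-1 : ℝ) • (D f + a • f)) (fun y hy => ?_) hzeros
      · rw [smul_apply] at this
        linarith
      · have := h y (hx.1.trans hy)
        rw [diffOp_cons', pow_succ] at this
        rw [map_smul, smul_apply]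
        linarith
    have hanti := antitoneOn_exp_mul f a (convex_Icc c z) hneg (Set.left_mem_Icc.2 hcz.le)
      (Set.right_mem_Icc.2 hcz.le) hcz.le
    simp only [hz, mul_zero] at hanti
    exact nonneg_of_mul_nonneg_right hanti (Real.exp_pos _)

end Rolle

/-! ### Decay at infinity -/

section Decay

variable {f : smoothFunctions} {b c : ℝ} {s : Multiset ℝ} {m : ℕ}

theorem eventually_lt_of_D_add_smul (hb : 0 < b) (h : Tendsto (D f + b • f) atTop (𝓝 0)) {ε : ℝ}
    (hε : 0 < ε) : ∀ᶠ x in atTop, f x < ε := by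
  obtain ⟨T, hT⟩ := eventually_atTop.1 (h.eventually_le_const (by positivity : 0 < b * (ε / 2)))
  let g : smoothFunctions := f - algebraMap ℝ smoothFunctions (ε / 2)
  have hgf (x : ℝ) : g x = f x - ε / 2 := rfl
  have hDg : D g = D f := D_eq_of_hasDerivAt fun x => (hasDerivAt_coe f x).sub_const _
  have hanti := antitoneOn_exp_mul g b (convex_Ici T) fun x hx => by
    have := hT x hx
    rw [add_apply, smul_apply] at this
    rw [add_apply, smul_apply, hDg, hgf]
    linarith
  have hexp : Tendsto (fun x => Real.exp (b * x)) atTop atTop :=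
    Real.tendsto_exp_atTop.comp (tendsto_id.const_mul_atTop hb)
  have hlim := hexp.const_div_atTop (Real.exp (b * T) * g T)
  filter_upwards [eventually_ge_atTop T, hlim.eventually_lt_const (half_pos hε)] with x hTx hx
  have hle : g x ≤ Real.exp (b * T) * g T / Real.exp (b * x) := by
    rw [le_div_iff₀' (Real.exp_pos _)]
    exact hanti Set.self_mem_Ici hTx hTx
  linarith [hgf x]

theorem tendsto_zero_of_D_add_smul (hb : 0 < b) (h : Tendsto (D f + b • f) atTop (𝓝 0)) :
    Tendsto f atTop (𝓝 0) := by
  have hneg : Tendsto (D (-f) + b • (-f)) atTop (𝓝 0) := by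
    rw [map_neg, smul_neg, ← neg_add]
    exact neg_zero (G := ℝ) ▸ h.neg
  rw [Metric.tendsto_nhds]
  intro ε hε
  filter_upwards [eventually_lt_of_D_add_smul hb h hε, eventually_lt_of_D_add_smul hb hneg hε]
    with x hx hx'
  rw [neg_apply] at hx'
  rw [dist_zero_right, Real.norm_eq_abs, abs_lt]
  constructor <;> linarith

theorem tendsto_zero_of_diffOp_eq_zero (hs : ∀ a ∈ s, 0 < a) (h : diffOp s f = 0) :
    Tendsto f atTop (𝓝 0) := by
  induction s using Multiset.induction_on generalizing f with
  | empty =>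
    rw [diffOp_zero] at h
    rw [h]
    exact tendsto_const_nhds
  | cons a s ih =>
    rw [Multiset.forall_mem_cons] at hs
    rw [diffOp_cons'] at h
    exact tendsto_zero_of_D_add_smul hs.1 (ih hs.2 h)

theorem tendsto_zero_D_pow (hs : ∀ a ∈ s, 0 < a) (h : diffOp s f = 0) (k : ℕ) :
    Tendsto ((D ^ k) f) atTop (𝓝 0) :=
  tendsto_zero_of_diffOp_eq_zero hs (by rw [diffOp_D_pow, h, map_zero])

theorem HasZerosAfter.D_of_tendsto (hlim : Tendsto f atTop (𝓝 0)) (hc : f c = 0)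
    (hf : HasZerosAfter f c m) : HasZerosAfter (D f) c (m + 1) := by
  induction m generalizing c with
  | zero =>
    obtain ⟨y, hy, hextr⟩ := exists_isLocalExtr_Ioi_of_tendsto (continuous_coe f) hlim hc
    exact ⟨y, hy, hextr.hasDerivAt_eq_zero (hasDerivAt_coe f y), trivial⟩
  | succ m ih =>
    obtain ⟨z, hcz, hz, hk⟩ := hf
    obtain ⟨y, hy, hfy⟩ := exists_hasDerivAt_eq_zero hcz (continuous_coe f).continuousOn
      (hc.trans hz.symm) fun x _ => hasDerivAt_coe f x
    exact ⟨y, hy.1, hfy, (ih hz hk).mono hy.2.le⟩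

theorem HasZerosAfter.D_pow (hs : ∀ a ∈ s, 0 < a) (h : MarkovBernstein.diffOp s f = 0)
    (hf : HasZerosAfter f c m) (k : ℕ) : HasZerosAfter ((D ^ k) f) c m := by
  induction k with
  | zero => exact hf
  | succ k ih =>
    cases m with
    | zero => trivial
    | succ m =>
      obtain ⟨z, hcz, hz, hm⟩ := ih
      rw [pow_succ', Module.End.mul_apply]
      exact (hm.D_of_tendsto (tendsto_zero_D_pow hs h k) hz).mono hcz.le

end Decay

/-! ### Exponential polynomials as kernels of differential operators -/

/-- The exponential polynomial `x ↦ q x * exp (-b * x)`, as a linear function of `q`. -/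
noncomputable def polyExp (b : ℝ) : ℝ[X] →ₗ[ℝ] smoothFunctions where
  toFun q := ⟨fun x => q.eval x * Real.exp (-b * x), by
    have hq : ContDiff ℝ ∞ fun x => q.eval x := by simpa using q.contDiff_aeval (𝕜 := ℝ) ∞
    exact hq.mul (by fun_prop)⟩
  map_add' p q := Subtype.ext <| funext fun x => by simp [add_mul]
  map_smul' r q := Subtype.ext <| funext fun x => by simp [mul_assoc]

section PolyExp

variable (a b : ℝ) (q : ℝ[X]) (s : Multiset ℝ)

theorem polyExp_apply (x : ℝ) : polyExp b q x = q.eval x * Real.exp (-b * x) := rfl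

theorem D_polyExp : D (polyExp b q) = polyExp b (derivative q - b • q) := by
  refine D_eq_of_hasDerivAt fun x => ?_
  have hexp : HasDerivAt (fun x => Real.exp (-b * x)) (Real.exp (-b * x) * -b) x := by
    simpa using ((hasDerivAt_id x).const_mul (-b)).exp
  refine ((q.hasDerivAt x).mul hexp).congr_deriv ?_
  rw [polyExp_apply, eval_sub, eval_smul, smul_eq_mul]
  ring

theorem D_polyExp_add_smul :
    D (polyExp b q) + a • polyExp b q = polyExp b (derivative q + (a - b) • q) := by
  rw [D_polyExp, ← map_smul, ← map_add]
  congr 1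
  module

theorem D_polyExp_one : D (polyExp b 1) = -b • polyExp b 1 := by
  rw [D_polyExp, derivative_one, zero_sub, ← neg_smul, map_smul]

theorem D_pow_polyExp_one (k : ℕ) : (D ^ k) (polyExp b 1) = (-b) ^ k • polyExp b 1 := by
  induction k with
  | zero => simp
  | succ k ih =>
    rw [pow_succ', Module.End.mul_apply, ih, map_smul, D_polyExp_one, smul_smul, pow_succ]

theorem polyExp_one_pos (x : ℝ) : 0 < polyExp b 1 x := by
  rw [polyExp_apply, eval_one, one_mul]
  exact Real.exp_pos _

variable {b q s} in
theorem diffOp_polyExp_eq_zero (hq : q.degree < s.count b) : diffOp s (polyExp b q) = 0 := by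
  induction s using Multiset.induction_on generalizing q with
  | empty =>
    have hq0 : q = 0 := by simpa using hq
    rw [hq0, map_zero, map_zero]
  | cons a s ih =>
    rw [diffOp_cons', D_polyExp_add_smul]
    apply ih
    rcases eq_or_ne b a with rfl | hba
    · rw [Multiset.count_cons_self, degree_lt_iff_coeff_zero] at hq
      rw [sub_self, zero_smul, add_zero, degree_lt_iff_coeff_zero]
      intro m hm
      rw [coeff_derivative, hq (m + 1) (Nat.succ_le_succ hm), zero_mul]
    · rw [Multiset.count_cons_of_ne hba] at hq
      exact (degree_add_le _ _).trans_lt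
        (max_lt (degree_derivative_le.trans_lt hq) ((degree_smul_le _ _).trans_lt hq))

variable {a} in
theorem exists_eq_smul_polyExp_one {f : smoothFunctions} (h : D f + a • f = 0) :
    ∃ β : ℝ, f = β • polyExp a 1 := by
  have hderiv (x : ℝ) : HasDerivAt (fun x => Real.exp (a * x) * f x) 0 x :=
    (hasDerivAt_exp_mul f a x).congr_deriv (by rw [h, zero_apply, mul_zero])
  refine ⟨f 0, Subtype.ext <| funext fun x => ?_⟩
  have hconst : Real.exp (a * x) * f x = f 0 := by
    simpa using is_const_of_deriv_eq_zero (fun x => (hderiv x).differentiableAt)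
      (fun x => (hderiv x).deriv) x 0
  rw [smul_apply, polyExp_apply, eval_one, one_mul, ← hconst, mul_right_comm, ← Real.exp_add]
  simp

variable {b} in
theorem tendsto_polyExp (hb : 0 < b) : Tendsto (polyExp b q) atTop (𝓝 0) := by
  refine tendsto_zero_of_diffOp_eq_zero (s := .replicate (q.natDegree + 1) b)
    (fun a ha => by rwa [Multiset.eq_of_mem_replicate ha]) (diffOp_polyExp_eq_zero ?_)
  rw [Multiset.count_replicate_self]
  exact degree_le_natDegree.trans_lt (by exact_mod_cast Nat.lt_succ_self _)

variable {b} in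
theorem tendsto_sqrt_mul_polyExp (hb : 0 < b) :
    Tendsto (fun x => √x * polyExp b q x) atTop (𝓝 0) := by
  refine squeeze_zero_norm' ?_ (tendsto_zero_iff_norm_tendsto_zero.1
    (tendsto_polyExp (X * q) hb))
  filter_upwards [eventually_ge_atTop 1] with x hx
  rw [polyExp_apply, polyExp_apply, eval_mul, eval_X, mul_assoc, norm_mul, norm_mul x]
  gcongr
  rw [Real.norm_of_nonneg (Real.sqrt_nonneg x), Real.norm_of_nonneg (zero_le_one.trans hx)]
  exact Real.sqrt_le_self_iff.2 (.inr hx)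

theorem D_surjective : Function.Surjective D := fun g => by
  have hderiv (x : ℝ) : HasDerivAt (fun x => ∫ y in (0 : ℝ)..x, g y) (g x) x :=
    (continuous_coe g).integral_hasStrictDerivAt 0 x |>.hasDerivAt
  have hsmooth : ContDiff ℝ ∞ fun x => ∫ y in (0 : ℝ)..x, g y := by
    refine contDiff_infty_iff_deriv.2 ⟨fun x => (hderiv x).differentiableAt, ?_⟩
    rw [funext fun x => (hderiv x).deriv]
    exact contDiff_coe g
  exact ⟨⟨_, hsmooth⟩, D_eq_of_hasDerivAt hderiv⟩

theorem exists_D_add_smul_eq (g : smoothFunctions) : ∃ f : smoothFunctions, D f + b • f = g := by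
  obtain ⟨G, hG⟩ := D_surjective (polyExp (-b) 1 * g)
  have hinv : polyExp b 1 * polyExp (-b) 1 = 1 := Subtype.ext <| funext fun x => by
    rw [mul_apply, polyExp_apply, polyExp_apply, eval_one, one_mul, one_mul, ← Real.exp_add]
    simp
  refine ⟨polyExp b 1 * G, ?_⟩
  rw [D_mul, hG, D_polyExp_one, ← mul_assoc, hinv, one_mul, smul_mul_assoc]
  module

theorem diffOp_surjective : Function.Surjective (diffOp s) := fun g => by
  induction s using Multiset.induction_on with
  | empty => exact ⟨g, diffOp_zero g⟩
  | cons a s ih =>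
    obtain ⟨f₁, hf₁⟩ := ih
    obtain ⟨f, hf⟩ := exists_D_add_smul_eq a f₁
    exact ⟨f, by rw [diffOp_cons', hf, hf₁]⟩

end PolyExp

section Interpolation

variable {s : Multiset ℝ} {f : smoothFunctions}

theorem exists_mem_ne_zero_of_diffOp_ne_zero (h : ∀ x, diffOp s f x ≠ 0) {T : Finset ℝ}
    (hT : T.card = s.card + 1) : ∃ x ∈ T, f x ≠ 0 := by
  by_contra! hzero
  obtain ⟨c, hc⟩ := T.bddBelow
  have hzeros : HasZerosAfter f (c - 1) T.card :=
    .of_finset T fun z hz => ⟨(sub_one_lt c).trans_le (hc hz), hzero z hz⟩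
  rw [hT, ← Nat.zero_add s.card] at hzeros
  obtain ⟨x, -, hx, -⟩ := hzeros.diffOp
  exact h x hx

theorem exists_diffOp_eq_zero_eqOn {T : Finset ℝ} (hT : T.card = s.card) (g : ℝ → ℝ) :
    ∃ f : smoothFunctions, diffOp s f = 0 ∧ ∀ x ∈ T, f x = g x := by
  induction s using Multiset.induction_on generalizing T g with
  | empty =>
    rw [Multiset.card_zero, Finset.card_eq_zero] at hT
    exact ⟨0, map_zero _, by simp [hT]⟩
  | cons a s ih =>
    rw [Multiset.card_cons] at hT
    obtain ⟨y, T, -, rfl, hTs⟩ := Finset.card_eq_succ.1 hT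
    obtain ⟨f, hf, hfg⟩ := ih hTs g
    obtain ⟨w, hw, hwT⟩ : ∃ w, diffOp s w = polyExp a 1 ∧ ∀ x ∈ T, w x = 0 := by
      obtain ⟨e, he⟩ := diffOp_surjective s (polyExp a 1)
      obtain ⟨e', he', hee'⟩ := ih hTs e
      exact ⟨e - e', by rw [map_sub, he, he', sub_zero],
        fun x hx => sub_eq_zero.2 (hee' x hx).symm⟩
    have hwy : w y ≠ 0 := by
      obtain ⟨x, hx, hwx⟩ := exists_mem_ne_zero_of_diffOp_ne_zero
        (fun x => hw ▸ (polyExp_one_pos a x).ne') hT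
      rcases Finset.mem_insert.1 hx with rfl | hx
      exacts [hwx, (hwx (hwT x hx)).elim]
    refine ⟨f + ((g y - f y) / w y) • w, ?_, fun x hx => ?_⟩
    · rw [diffOp_cons, map_add, hf, map_smul, hw, zero_add, map_smul, D_polyExp_one]
      module
    · rw [add_apply, smul_apply]
      rcases Finset.mem_insert.1 hx with rfl | hx
      · rw [div_mul_cancel₀ _ hwy, add_sub_cancel]
      · rw [hwT x hx, mul_zero, add_zero, hfg x hx]

theorem exists_diffOp_eq_zero_eq_nodes {t : ℕ → ℝ} {n : ℕ} (ht : StrictMonoOn t (Set.Iic n))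
    (hs : s.card = n + 1) (g : ℝ → ℝ) :
    ∃ f : smoothFunctions, diffOp s f = 0 ∧ ∀ i ≤ n, f (t i) = g (t i) := by
  have hinj : Set.InjOn t (Finset.Iic n) := by simpa using ht.injOn
  obtain ⟨f, hf, hfg⟩ := exists_diffOp_eq_zero_eqOn (T := (Finset.Iic n).image t)
    (by rw [Finset.card_image_of_injOn hinj, Nat.card_Iic, hs]) g
  exact ⟨f, hf, fun i hi => hfg _ (Finset.mem_image_of_mem t (Finset.mem_Iic.2 hi))⟩

end Interpolation

/-! ### Comparison of derivatives at the first node -/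

section Comparison

variable {f u v p : smoothFunctions} {a b c β K : ℝ} {s : Multiset ℝ} {t : ℕ → ℝ} {n : ℕ}

theorem nonneg_of_diffOp_eq_smul_polyExp (h : diffOp s f = β • polyExp b 1)
    (hf : HasZerosAfter f c s.card) (hc : 0 < f c) : 0 ≤ (-1) ^ s.card * β := by
  by_contra! hβ
  have hneg : 0 ≤ ((-1 : ℝ) • f) c := by
    refine nonneg_of_diffOp_nonneg (s := s) (fun x _ => ?_) (hf.const_smul (-1))
    rw [map_smul, h, smul_apply, smul_apply]
    have := mul_pos (neg_pos.2 hβ) (polyExp_one_pos b x)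
    linarith
  rw [smul_apply] at hneg
  linarith

theorem D_pow_nonneg_of_diffOp_eq_smul_polyExp (h : diffOp s f = β • polyExp b 1) (hb : 0 ≤ b)
    (hβ : 0 ≤ (-1) ^ s.card * β) {k : ℕ} (hf : HasZerosAfter ((D ^ k) f) c s.card) :
    0 ≤ (-1) ^ k * (D ^ k) f c := by
  have hdiff : diffOp s ((-1 : ℝ) ^ k • (D ^ k) f) = (β * b ^ k) • polyExp b 1 := by
    have hsign : (-1 : ℝ) ^ k * (-b) ^ k = b ^ k := by rw [← mul_pow, neg_one_mul, neg_neg]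
    rw [map_smul, diffOp_D_pow, h, map_smul, D_pow_polyExp_one, smul_smul, smul_smul, ← hsign]
    congr 1
    ring
  refine nonneg_of_diffOp_nonneg (s := s) (f := (-1 : ℝ) ^ k • (D ^ k) f) (fun x _ => ?_)
    (hf.const_smul _)
  rw [hdiff, smul_apply, ← mul_assoc, ← mul_assoc]
  exact mul_nonneg (mul_nonneg hβ (pow_nonneg hb k)) (polyExp_one_pos b x).le

theorem exists_diffOp_eq_smul_polyExp (h : diffOp (b ::ₘ s) f = 0)
    (hf : AlternatesAt f t s.card) :
    ∃ β : ℝ, diffOp s f = β • polyExp b 1 ∧ 0 ≤ (-1) ^ s.card * β := by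
  rw [diffOp_cons] at h
  obtain ⟨β, hβ⟩ := exists_eq_smul_polyExp_one h
  exact ⟨β, hβ, nonneg_of_diffOp_eq_smul_polyExp hβ (hf.hasZerosAfter (continuous_coe f))
    hf.pos_zero⟩

theorem AlternatesAt.D_pow_nonneg (hs : ∀ a ∈ s, 0 < a) (hcard : s.card = n + 1)
    (h : diffOp s f = 0) (hf : AlternatesAt f t n) (k : ℕ) : 0 ≤ (-1) ^ k * (D ^ k) f (t 0) := by
  obtain ⟨b, hb⟩ := Multiset.card_pos_iff_exists_mem.1 (by omega : 0 < s.card)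
  obtain ⟨s, rfl⟩ := Multiset.exists_cons_of_mem hb
  obtain rfl : s.card = n := by simpa using hcard
  obtain ⟨β, hβ, hβs⟩ := exists_diffOp_eq_smul_polyExp h hf
  exact D_pow_nonneg_of_diffOp_eq_smul_polyExp hβ (hs b hb).le hβs
    ((hf.hasZerosAfter (continuous_coe f)).D_pow hs h k)

theorem abs_D_pow_le_of_abs_lt (hs : ∀ a ∈ s, 0 < a) (hcard : s.card = n + 1)
    (hp : diffOp s p = 0) (hv : diffOp s v = 0) (ht : StrictMonoOn t (Set.Iic n))
    (hpv : ∀ i ≤ n, |p (t i)| < (-1) ^ i * v (t i)) (k : ℕ) :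
    |(D ^ k) p (t 0)| ≤ (-1) ^ k * (D ^ k) v (t 0) := by
  have habs (i : ℕ) (y : ℝ) : |(-1) ^ i * y| = |y| := by simp [abs_mul]
  have hsign {σ : ℝ} (hσ : |σ| = 1) :
      0 ≤ (-1) ^ k * (D ^ k) v (t 0) + σ * ((-1) ^ k * (D ^ k) p (t 0)) := by
    have halt : AlternatesAt (v + σ • p : smoothFunctions) t n := ⟨ht, fun i hi => by
      have hle : |(-1) ^ i * (σ * p (t i))| = |p (t i)| := by rw [habs, abs_mul, hσ, one_mul]
      rw [add_apply, smul_apply, mul_add]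
      linarith [hpv i hi, neg_abs_le ((-1) ^ i * (σ * p (t i)))]⟩
    have hker : diffOp s (v + σ • p) = 0 := by
      rw [map_add, map_smul, hv, hp, smul_zero, add_zero]
    have := halt.D_pow_nonneg hs hcard hker k
    rw [map_add, map_smul, add_apply, smul_apply] at this
    linarith
  have hadd := hsign abs_one
  have hsub := hsign (abs_neg (1 : ℝ) ▸ abs_one)
  rw [← habs k, abs_le]
  constructor <;> linarith

theorem D_pow_le_of_cons_le (hs : ∀ a ∈ s, 0 < a) (ha : 0 < a) (hab : a ≤ b)
    (hu : diffOp (b ::ₘ s) u = 0) (hv : diffOp (a ::ₘ s) v = 0) (hut : AlternatesAt u t s.card)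
    (huv : ∀ i ≤ s.card, v (t i) = u (t i)) (k : ℕ) :
    (-1) ^ k * (D ^ k) v (t 0) ≤ (-1) ^ k * (D ^ k) u (t 0) := by
  cases k with
  | zero => simpa using (huv 0 (Nat.zero_le _)).le
  | succ k =>
    obtain ⟨β, hβ, hβs⟩ := exists_diffOp_eq_smul_polyExp hu hut
    have hdiff : diffOp (a ::ₘ s) (u - v) = (β * (a - b)) • polyExp b 1 := by
      rw [map_sub, hv, sub_zero, diffOp_cons, hβ, map_smul, D_polyExp_one]
      module
    have hker : diffOp (b ::ₘ a ::ₘ s) (u - v) = 0 := by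
      rw [diffOp_cons, hdiff, map_smul, D_polyExp_one]
      module
    have hpos : ∀ c ∈ b ::ₘ a ::ₘ s, 0 < c :=
      Multiset.forall_mem_cons.2 ⟨ha.trans_le hab, Multiset.forall_mem_cons.2 ⟨ha, hs⟩⟩
    have hzero : ∀ i ≤ s.card, (u - v) (t i) = 0 := fun i hi => sub_eq_zero.2 (huv i hi).symm
    have hzeros : HasZerosAfter ((D ^ (k + 1)) (u - v)) (t 0) (a ::ₘ s).card := by
      rw [Multiset.card_cons, pow_succ, Module.End.mul_apply]
      refine HasZerosAfter.D_pow hpos (by rw [← pow_one D, diffOp_D_pow, hker, map_zero]) ?_ k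
      exact (HasZerosAfter.of_nodes hut.strictMonoOn hzero).D_of_tendsto
        (tendsto_zero_of_diffOp_eq_zero hpos hker) (hzero 0 (Nat.zero_le _))
    have hsign : 0 ≤ (-1) ^ (a ::ₘ s).card * (β * (a - b)) := by
      rw [Multiset.card_cons, pow_succ]
      linarith [mul_nonneg hβs (sub_nonneg.2 hab)]
    have := D_pow_nonneg_of_diffOp_eq_smul_polyExp hdiff (ha.trans_le hab).le hsign hzeros
    rw [map_sub, sub_apply] at this
    linarith

theorem D_pow_le_of_replicate {r : Multiset ℝ} {j : ℕ} (hr : ∀ a ∈ r, 0 < a ∧ a ≤ b) (hb : 0 < b)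
    (hcard : r.card + j = n + 1) (hu : diffOp (.replicate (n + 1) b) u = 0)
    (hut : AlternatesAt u t n) (hv : diffOp (r + .replicate j b) v = 0)
    (huv : ∀ i ≤ n, v (t i) = u (t i)) (k : ℕ) :
    (-1) ^ k * (D ^ k) v (t 0) ≤ (-1) ^ k * (D ^ k) u (t 0) := by
  induction r using Multiset.induction_on generalizing j v with
  | empty =>
    rw [Multiset.card_zero, zero_add] at hcard
    subst hcard
    rw [zero_add] at hv
    rw [Multiset.replicate_succ] at hu hv
    refine D_pow_le_of_cons_le (fun a ha => ?_) hb le_rfl hu hv (by simpa using hut)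
      (by simpa using huv) k
    rwa [Multiset.eq_of_mem_replicate ha]
  | cons a r ih =>
    obtain ⟨⟨ha, hab⟩, hr⟩ := Multiset.forall_mem_cons.1 hr
    rw [Multiset.card_cons] at hcard
    have hcard' : (r + .replicate j b).card = n := by
      rw [Multiset.card_add, Multiset.card_replicate]
      omega
    obtain ⟨w, hw, hwu⟩ := exists_diffOp_eq_zero_eq_nodes (s := b ::ₘ (r + .replicate j b))
      hut.strictMonoOn (by rw [Multiset.card_cons, hcard']) u
    have hwu' : (-1) ^ k * (D ^ k) w (t 0) ≤ (-1) ^ k * (D ^ k) u (t 0) := by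
      refine ih hr (j := j + 1) (by omega) ?_ hwu
      rwa [Multiset.replicate_succ, Multiset.add_cons]
    refine le_trans (D_pow_le_of_cons_le (fun c hc => ?_) ha hab hw
      (by rwa [← Multiset.cons_add]) (hcard'.symm ▸ hut.congr hwu)
      (fun i hi => ?_) k) hwu'
    · rcases Multiset.mem_add.1 hc with hc | hc
      exacts [(hr c hc).1, Multiset.eq_of_mem_replicate hc ▸ hb]
    · rw [hcard'] at hi
      rw [huv i hi, hwu i hi]

theorem abs_D_pow_le_of_one_le (hs : ∀ a ∈ s, 0 < a ∧ a ≤ b) (hcard : s.card = n + 1)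
    (ht : StrictMonoOn t (Set.Iic n)) (hu : diffOp (.replicate (n + 1) b) u = 0)
    (hut : ∀ i ≤ n, 1 ≤ (-1) ^ i * u (t i)) (hp : diffOp s p = 0)
    (hpt : ∀ i ≤ n, |p (t i)| ≤ K) (k : ℕ) :
    |(D ^ k) p (t 0)| ≤ (-1) ^ k * (D ^ k) u (t 0) * K := by
  have hb : 0 < b := by
    obtain ⟨a, ha⟩ := Multiset.card_pos_iff_exists_mem.1 (by omega : 0 < s.card)
    exact (hs a ha).1.trans_le (hs a ha).2
  have halt : AlternatesAt u t n := ⟨ht, fun i hi => one_pos.trans_le (hut i hi)⟩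
  obtain ⟨v, hv, hvu⟩ := exists_diffOp_eq_zero_eq_nodes ht hcard u
  have hvu' := D_pow_le_of_replicate (j := 0) hs hb hcard hu halt (by simpa using hv) hvu k
  have hstrict : ∀ L > K, |(D ^ k) p (t 0)| ≤ (-1) ^ k * (D ^ k) u (t 0) * L := fun L hL => by
    have hL0 : 0 < L := ((abs_nonneg _).trans (hpt 0 n.zero_le)).trans_lt hL
    have := abs_D_pow_le_of_abs_lt (v := L • v) (fun a ha => (hs a ha).1) hcard hp
      (by rw [map_smul, hv, smul_zero]) ht (fun i hi => ?_) k
    · rw [map_smul, smul_apply] at this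
      linarith [mul_le_mul_of_nonneg_left hvu' hL0.le]
    · rw [smul_apply, hvu i hi]
      linarith [hpt i hi, mul_le_mul_of_nonneg_left (hut i hi) hL0.le]
  have hcont : Tendsto (fun L => (-1) ^ k * (D ^ k) u (t 0) * L) (𝓝[>] K)
      (𝓝 ((-1) ^ k * (D ^ k) u (t 0) * K)) :=
    ((continuous_const_mul _).tendsto K).mono_left nhdsWithin_le_nhds
  exact ge_of_tendsto hcont (eventually_mem_nhdsWithin.mono hstrict)

end Comparison

/-! ### The extremal function -/

/-- The Laguerre polynomial of parameter `-1/2`, rescaled and normalised: `laguerreHalf n` is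
`L_n^(-1/2)(2 * X)` divided by its value `L_n^(-1/2)(0)` at the origin. The recursion comes from
Rodrigues' formula. -/
noncomputable def laguerreHalf : ℕ → ℝ[X]
  | 0 => 1
  | n + 1 => laguerreHalf n +
      C (2 / (2 * n + 1) : ℝ) * (X * (derivative (laguerreHalf n) - 2 * laguerreHalf n))

section Laguerre

variable (n : ℕ)

theorem laguerreHalf_succ_eval (x : ℝ) :
    (laguerreHalf (n + 1)).eval x = (laguerreHalf n).eval x + 2 / (2 * n + 1) *
      (x * ((derivative (laguerreHalf n)).eval x - 2 * (laguerreHalf n).eval x)) := by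
  simp [laguerreHalf]

theorem laguerreHalf_eval_zero : (laguerreHalf n).eval 0 = 1 := by
  induction n with
  | zero => simp [laguerreHalf]
  | succ n ih => rw [laguerreHalf_succ_eval, zero_mul, mul_zero, add_zero, ih]

theorem natDegree_laguerreHalf_le : (laguerreHalf n).natDegree ≤ n := by
  induction n with
  | zero => simp [laguerreHalf]
  | succ n ih =>
    rw [laguerreHalf]
    compute_degree
    all_goals omega

theorem laguerreHalf_ode :
    2 * X * derivative (derivative (laguerreHalf n)) +
      (1 - 4 * X) * derivative (laguerreHalf n) + 4 * (n : ℝ[X]) * laguerreHalf n = 0 := by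
  induction n with
  | zero => simp [laguerreHalf]
  | succ n ih =>
    have hκ : (2 * (n : ℝ[X]) + 1) * C (2 / (2 * n + 1) : ℝ) = 2 := by
      have hreal : (2 * n + 1 : ℝ) * (2 / (2 * n + 1)) = 2 := mul_div_cancel₀ _ (by positivity)
      simpa only [map_mul, map_add, map_one, map_natCast, map_ofNat] using congrArg C hreal
    have ih' := congrArg derivative ih
    rw [laguerreHalf]
    generalize (2 / (2 * n + 1) : ℝ) = κ at hκ
    simp only [derivative_add, derivative_sub, derivative_mul, derivative_C, derivative_X,
      derivative_one, derivative_ofNat, derivative_natCast, derivative_zero, Nat.cast_add,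
      Nat.cast_one] at ih' ⊢
    linear_combination (1 + C κ - 2 * X * C κ) * ih + C κ * X * ih' - 2 * laguerreHalf n * hκ

/-- The solution of `(D + 1) ^ (n + 1) u = 0` whose derivatives at `0` dominate those of every
exponential polynomial with `n + 1` exponents in `(0, 1]` and sup norm at most `1`. -/
noncomputable def extremal : smoothFunctions := polyExp 1 (laguerreHalf n)

theorem extremal_apply (x : ℝ) : extremal n x = (laguerreHalf n).eval x * Real.exp (-1 * x) := rfl

theorem diffOp_extremal : diffOp (.replicate (n + 1) 1) (extremal n) = 0 := by
  apply diffOp_polyExp_eq_zero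
  rw [Multiset.count_replicate_self]
  exact degree_le_natDegree.trans_lt
    (by exact_mod_cast Nat.lt_succ_of_le (natDegree_laguerreHalf_le n))

theorem extremal_zero : extremal n 0 = 1 := by
  simp [extremal_apply, laguerreHalf_eval_zero]

theorem extremal_ode (x : ℝ) :
    2 * x * D (D (extremal n)) x + D (extremal n) x + (4 * n + 1 - 2 * x) * extremal n x = 0 := by
  have hode := congrArg (eval x) (laguerreHalf_ode n)
  simp only [eval_add, eval_mul, eval_sub, eval_X, eval_one, eval_ofNat, eval_natCast,
    eval_zero] at hode
  simp only [extremal, D_polyExp, polyExp_apply, derivative_sub, derivative_smul, eval_sub,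
    eval_smul, smul_eq_mul]
  linear_combination Real.exp (-1 * x) * hode

theorem D_D_extremal_zero : D (D (extremal n)) 0 = (16 * (n : ℝ) ^ 2 + 8 * n + 3) / 3 := by
  have hode := congrArg (eval 0) (laguerreHalf_ode n)
  have hode' := congrArg (eval 0) (congrArg derivative (laguerreHalf_ode n))
  simp only [derivative_add, derivative_sub, derivative_mul, derivative_X, derivative_one,
    derivative_ofNat, derivative_natCast, derivative_zero, eval_add, eval_mul, eval_sub, eval_X,
    eval_one, eval_ofNat, eval_natCast, eval_zero, laguerreHalf_eval_zero] at hode hode'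
  simp only [extremal, D_polyExp, polyExp_apply, derivative_sub, derivative_smul, eval_sub,
    eval_smul, smul_eq_mul, laguerreHalf_eval_zero, mul_zero, Real.exp_zero]
  linear_combination hode' / 3 - (2 + 4 * n) / 3 * hode

/-- One step of Rodrigues' formula: up to a positive factor, differentiation passes from degree `n`
to degree `n + 1`, and so creates one more sign change. -/
theorem hasDerivAt_sqrt_mul_polyExp {x : ℝ} (hx : 0 < x) :
    HasDerivAt (fun x => √x * polyExp 2 (X ^ n * laguerreHalf n) x)
      ((n + 1 / 2) * x ^ n / √x * Real.exp (-2 * x) * (laguerreHalf (n + 1)).eval x) x := by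
  refine ((Real.hasDerivAt_sqrt hx.ne').mul (hasDerivAt_coe _ x)).congr_deriv ?_
  have hsqrt : √x = x / √x := (Real.div_sqrt).symm
  have hpow : x * (n * x ^ (n - 1)) = n * x ^ n := by
    cases n with
    | zero => simp
    | succ n => rw [Nat.add_sub_cancel, pow_succ]; ring
  rw [D_polyExp, polyExp_apply, polyExp_apply, laguerreHalf_succ_eval]
  simp only [derivative_mul, derivative_X_pow, eval_sub, eval_smul, eval_add, eval_mul, eval_pow,
    eval_X, eval_C, smul_eq_mul]
  nth_rw 2 [hsqrt]
  field_simp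
  linear_combination 2 * (laguerreHalf n).eval x * hpow

theorem alternatesAfter_laguerreHalf :
    AlternatesAfter (Set.Ioi 0) (fun x => (laguerreHalf n).eval x) 0 (n + 1) := by
  induction n with
  | zero => exact ⟨1, one_pos, by simp [laguerreHalf], trivial⟩
  | succ n ih =>
    have hsign : AlternatesAfter (Set.Ioi 0)
        (fun x => √x * polyExp 2 (X ^ n * laguerreHalf n) x) 0 (n + 1) :=
      ih.congr_sign fun x (hx : 0 < x) => by
        simp [polyExp_apply, sign_mul, sign_pos, hx, Real.exp_pos]
    refine (hsign.deriv_of_eq_zero (Real.continuous_sqrt.mul (continuous_coe _))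
      (tendsto_sqrt_mul_polyExp _ two_pos) (fun x hx => hasDerivAt_sqrt_mul_polyExp n hx)
      (by simp)).congr_sign fun x (hx : 0 < x) => ?_
    rw [sign_mul, sign_pos (by positivity), one_mul]

end Laguerre

/-! ### The size of the local maxima -/

section Sonin

variable {g : smoothFunctions} {A s : ℝ}

theorem hasDerivAt_sqrt_mul_D_of_ode
    (hode : ∀ x, 2 * x * D (D g) x + D g x + (A - 2 * x) * g x = 0) {x : ℝ} (hx : 0 < x) :
    HasDerivAt (fun x => √x * D g x) ((2 * x - A) * g x / (2 * √x)) x := by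
  refine ((Real.hasDerivAt_sqrt hx.ne').mul (hasDerivAt_coe (D g) x)).congr_deriv ?_
  have hsqrt : √x * √x = x := Real.mul_self_sqrt hx.le
  field_simp
  linear_combination hode x + 2 * D (D g) x * hsqrt

theorem two_mul_lt_of_isLocalMax_of_ode
    (hode : ∀ x, 2 * x * D (D g) x + D g x + (A - 2 * x) * g x = 0) (hs : 0 < s)
    (hmax : IsLocalMax g s) (hpos : 0 < g s) : 2 * s < A := by
  by_contra! hA
  obtain ⟨u, hsu : s < u, hu⟩ := mem_nhdsGE_iff_exists_Icc_subset.1 <|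
    (hmax.and ((continuous_coe g).continuousAt.eventually_const_lt hpos)).filter_mono
      (nhdsWithin_le_nhds (s := Set.Ici s))
  have hweighted : StrictMonoOn (fun x => √x * D g x) (Set.Icc s u) := by
    refine strictMonoOn_of_hasDerivWithinAt_pos (convex_Icc s u)
      (Real.continuous_sqrt.mul (continuous_coe _)).continuousOn
      (fun x hx => (hasDerivAt_sqrt_mul_D_of_ode hode
        (hs.trans_le (interior_subset hx).1)).hasDerivWithinAt) fun x hx => ?_
    have hgx : 0 < g x := (hu (interior_subset hx)).2
    rw [interior_Icc] at hx
    have hx0 : 0 < x := hs.trans hx.1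
    have hAx : 0 < 2 * x - A := by linarith [hx.1]
    positivity
  have hderiv (x : ℝ) (hx : x ∈ Set.Ioo s u) : 0 < D g x := by
    have hlt := hweighted (Set.left_mem_Icc.2 hsu.le) (Set.Ioo_subset_Icc_self hx) hx.1
    simp only [hmax.hasDerivAt_eq_zero (hasDerivAt_coe g s), mul_zero] at hlt
    exact pos_of_mul_pos_right hlt (Real.sqrt_nonneg x)
  have hmono : StrictMonoOn g (Set.Icc s u) :=
    strictMonoOn_of_hasDerivWithinAt_pos (convex_Icc s u) (continuous_coe g).continuousOn
      (fun x _ => (hasDerivAt_coe g x).hasDerivWithinAt) (by rwa [interior_Icc])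
  exact (hmono (Set.left_mem_Icc.2 hsu.le) (Set.right_mem_Icc.2 hsu.le) hsu).not_ge
    (hu (Set.right_mem_Icc.2 hsu.le)).1

/-- Sonin's energy of a solution `g` of `2 * x * g'' + g' + (A - 2 * x) * g = 0`; it equals `g ^ 2`
at critical points of `g`, and is only meaningful for `2 * x < A`. -/
noncomputable def soninEnergy (g : smoothFunctions) (A x : ℝ) : ℝ :=
  g x ^ 2 + 2 * x * D g x ^ 2 / (A - 2 * x)

theorem hasDerivAt_soninEnergy
    (hode : ∀ x, 2 * x * D (D g) x + D g x + (A - 2 * x) * g x = 0) {x : ℝ} (hx : 2 * x < A) :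
    HasDerivAt (soninEnergy g A) (4 * x * D g x ^ 2 / (A - 2 * x) ^ 2) x := by
  have hA : A - 2 * x ≠ 0 := (sub_pos.2 hx).ne'
  have hlin : HasDerivAt (fun x : ℝ => 2 * x) 2 x := by simpa using (hasDerivAt_id x).const_mul 2
  have hfraction := (hlin.fun_mul ((hasDerivAt_coe (D g) x).fun_pow 2)).fun_div
    (hlin.const_sub A) hA
  refine (((hasDerivAt_coe g x).fun_pow 2).add hfraction).congr_deriv ?_
  field_simp
  linear_combination 2 * (A - 2 * x) * D g x * hode x

theorem monotoneOn_soninEnergy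
    (hode : ∀ x, 2 * x * D (D g) x + D g x + (A - 2 * x) * g x = 0) :
    MonotoneOn (soninEnergy g A) (Set.Ico 0 (A / 2)) := by
  have hderiv (x : ℝ) (hx : x ∈ Set.Ico 0 (A / 2)) :=
    hasDerivAt_soninEnergy hode (x := x) (by linarith [hx.2])
  refine monotoneOn_of_hasDerivWithinAt_nonneg (convex_Ico _ _)
    (fun x hx => (hderiv x hx).continuousAt.continuousWithinAt)
    (fun x hx => (hderiv x (interior_subset hx)).hasDerivWithinAt) fun x hx => ?_
  have hx0 : 0 ≤ x := (interior_subset hx).1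
  positivity

theorem abs_zero_le_of_isLocalMax_of_ode
    (hode : ∀ x, 2 * x * D (D g) x + D g x + (A - 2 * x) * g x = 0) (hs : 0 < s)
    (hmax : IsLocalMax g s) (hpos : 0 < g s) : |g 0| ≤ g s := by
  have hsA : 2 * s < A := two_mul_lt_of_isLocalMax_of_ode hode hs hmax hpos
  have henergy := monotoneOn_soninEnergy hode (Set.mem_Ico.2 ⟨le_rfl, by linarith⟩)
    (Set.mem_Ico.2 ⟨hs.le, by linarith⟩) hs.le
  refine abs_le_of_sq_le_sq ?_ hpos.le
  simpa [soninEnergy, hmax.hasDerivAt_eq_zero (hasDerivAt_coe g s)] using henergy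

end Sonin

theorem one_le_extremal_of_isLocalMax (n : ℕ) {s : ℝ} (hs : 0 < s)
    (hmax : IsLocalMax (extremal n) s) (hpos : 0 < extremal n s) : 1 ≤ extremal n s := by
  simpa [extremal_zero] using abs_zero_le_of_isLocalMax_of_ode (extremal_ode n) hs hmax hpos

theorem one_le_neg_extremal_of_isLocalMax (n : ℕ) {s : ℝ} (hs : 0 < s)
    (hmax : IsLocalMax (-extremal n : smoothFunctions) s)
    (hpos : 0 < (-extremal n : smoothFunctions) s) : 1 ≤ (-extremal n : smoothFunctions) s := by
  have hode (x : ℝ) : 2 * x * D (D (-extremal n)) x + D (-extremal n) x +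
      (4 * n + 1 - 2 * x) * (-extremal n : smoothFunctions) x = 0 := by
    simp only [map_neg, neg_apply]
    linear_combination -extremal_ode n x
  simpa [neg_apply, extremal_zero] using abs_zero_le_of_isLocalMax_of_ode hode hs hmax hpos

theorem exists_nodes_extremal (n : ℕ) :
    ∃ t : ℕ → ℝ, t 0 = 0 ∧ StrictMonoOn t (Set.Iic n) ∧
      ∀ i ≤ n, 1 ≤ (-1) ^ i * extremal n (t i) := by
  have halt : AlternatesAfter (Set.Ioi 0) (-extremal n) 0 n := by
    obtain ⟨z, hz, -, halt⟩ := alternatesAfter_laguerreHalf n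
    refine (halt.congr_sign fun x _ => ?_).mono hz.le
    simp [extremal_apply, Left.sign_neg, sign_mul, sign_pos, Real.exp_pos]
  have hlim : Tendsto (-extremal n) atTop (𝓝 0) :=
    neg_zero (G := ℝ) ▸ (tendsto_polyExp (laguerreHalf n) one_pos).neg
  have halt' : AlternatesAfter (Set.Ici 1) (-extremal n) 0 n :=
    halt.of_isLocalMax (continuous_coe (extremal n)).neg hlim le_rfl
      (fun s hs => one_le_neg_extremal_of_isLocalMax n hs)
      (by simpa using fun s hs => one_le_extremal_of_isLocalMax n hs) (by simp [extremal_zero])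
  obtain ⟨t, ht0, ht, hut⟩ := halt'.exists_nodes
  refine ⟨t, ht0, ht, fun i hi => ?_⟩
  cases i with
  | zero => simp [ht0, extremal_zero]
  | succ i => simpa [pow_succ] using hut i hi

/-! ### Derivative bounds for exponential polynomials -/

theorem abs_D_pow_le_of_abs_le {s : Multiset ℝ} {n : ℕ} {f : smoothFunctions} {K : ℝ}
    (hs : ∀ a ∈ s, 0 < a ∧ a ≤ 1) (hcard : s.card = n + 1) (hf : diffOp s f = 0)
    (hK : ∀ x, 0 ≤ x → |f x| ≤ K) (k : ℕ) {x : ℝ} (hx : 0 ≤ x) :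
    |(D ^ k) f x| ≤ (-1) ^ k * (D ^ k) (extremal n) 0 * K := by
  obtain ⟨t, ht0, ht, hut⟩ := exists_nodes_extremal n
  have hker : diffOp s (translate x f) = 0 := by rw [diffOp_translate, hf]; rfl
  have hbound (i : ℕ) (hi : i ≤ n) : |translate x f (t i)| ≤ K :=
    hK _ (add_nonneg (ht0 ▸ ht.monotoneOn (Set.mem_Iic.2 n.zero_le) hi i.zero_le) hx)
  have hmain := abs_D_pow_le_of_one_le hs hcard ht (diffOp_extremal n) hut hker hbound k
  rw [D_pow_translate, ht0] at hmain
  simpa only [translate, zero_add] using hmain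

theorem bddAbove_abs_image_Ici {f : ℝ → ℝ} (hf : Continuous f) {l : ℝ}
    (hlim : Tendsto f atTop (𝓝 l)) (c : ℝ) : BddAbove ((fun x => |f x|) '' Set.Ici c) := by
  obtain ⟨T, hT⟩ := eventually_atTop.1 (hlim.abs.eventually_le_const (lt_add_one |l|))
  have hcompact : BddAbove ((fun x => |f x|) '' Set.Icc c T) :=
    isCompact_Icc.bddAbove_image hf.abs.continuousOn
  have htail : BddAbove ((fun x => |f x|) '' Set.Ici T) :=
    ⟨|l| + 1, Set.forall_mem_image.2 hT⟩
  refine (hcompact.union htail).mono ?_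
  rw [← Set.image_union]
  exact Set.image_mono Set.Ici_subset_Icc_union_Ici

theorem abs_le_supAbs {f : ℝ → ℝ} (hf : Continuous f) {l : ℝ} (hlim : Tendsto f atTop (𝓝 l))
    {x : ℝ} (hx : 0 ≤ x) : |f x| ≤ supAbs f :=
  le_csSup (bddAbove_abs_image_Ici hf hlim 0) (Set.mem_image_of_mem _ hx)

theorem card_lt_count_map {d : ℕ} (h : Fin d → ℝ) (i : Fin d) :
    Nat.card {j : Fin d // j < i ∧ h j = h i} < (Finset.univ.val.map h).count (h i) := by
  classical
  rw [Nat.card_eq_fintype_card, Fintype.card_subtype, Multiset.count_map, ← Finset.filter_val,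
    Finset.card_val]
  refine Finset.card_lt_card (Finset.ssubset_iff_of_subset (fun j hj => ?_) |>.2 ⟨i, ?_, ?_⟩)
  · simp only [Finset.mem_filter_univ] at hj ⊢
    exact hj.2.symm
  all_goals simp

theorem exists_diffOp_eq_zero_of_mem_expPoly {d : ℕ} {h : Fin d → ℝ} {p : ℝ → ℝ}
    (hp : p ∈ expPoly d h) :
    ∃ f : smoothFunctions, f = p ∧ diffOp (Finset.univ.val.map h) f = 0 := by
  obtain ⟨c, hc⟩ := hp
  refine ⟨∑ i, c i • polyExp (h i) (X ^ Nat.card {j : Fin d // j < i ∧ h j = h i}), ?_, ?_⟩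
  · ext x
    rw [hc x, AddSubmonoidClass.coe_finsetSum, Finset.sum_apply]
    refine Finset.sum_congr rfl fun i _ => ?_
    rw [smul_apply, polyExp_apply, eval_pow, eval_X, mul_assoc]
  · rw [map_sum]
    refine Finset.sum_eq_zero fun i _ => ?_
    rw [map_smul, diffOp_polyExp_eq_zero, smul_zero]
    rw [degree_X_pow]
    exact_mod_cast card_lt_count_map h i

theorem abs_iteratedDeriv_le_of_mem_expPoly {n : ℕ} {h : Fin (n + 1) → ℝ} (hpos : ∀ i, 0 < h i)
    (hone : ∀ i, h i ≤ 1) {p : ℝ → ℝ} (hp : p ∈ expPoly (n + 1) h) (k : ℕ) {t : ℝ} (ht : 0 ≤ t) :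
    |iteratedDeriv k p t| ≤ (-1) ^ k * iteratedDeriv k (extremal n) 0 * supAbs p := by
  obtain ⟨f, rfl, hf⟩ := exists_diffOp_eq_zero_of_mem_expPoly hp
  have hexp : ∀ a ∈ Finset.univ.val.map h, 0 < a ∧ a ≤ 1 :=
    Multiset.forall_mem_map_iff.2 fun i _ => ⟨hpos i, hone i⟩
  have hlim : Tendsto f atTop (𝓝 0) :=
    tendsto_zero_of_diffOp_eq_zero (fun a ha => (hexp a ha).1) hf
  rw [← coe_D_pow, ← coe_D_pow]
  exact abs_D_pow_le_of_abs_le hexp (by simp) hf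
    (fun x hx => abs_le_supAbs (continuous_coe f) hlim hx) k ht

end MarkovBernstein

open MarkovBernstein in
theorem markov_bernstein_second_order_general {d : ℕ} {h : Fin d → ℝ} (hpos : ∀ i, 0 < h i)
    (hone : ∀ i, h i ≤ 1) {p : ℝ → ℝ} (hp : p ∈ expPoly d h) {t : ℝ} (ht : 0 ≤ t) :
    |iteratedDeriv 2 p t| ≤ ((16 * (d : ℝ) ^ 2 - 24 * (d : ℝ) + 11) / 3) * supAbs p := by
  cases d with
  | zero =>
    obtain rfl : p = 0 := funext fun x => by simpa using hp.choose_spec x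
    simp [supAbs]
  | succ n =>
    refine (abs_iteratedDeriv_le_of_mem_expPoly hpos hone hp 2 ht).trans_eq ?_
    have hvalue : iteratedDeriv 2 (extremal n) 0 = (16 * (n : ℝ) ^ 2 + 8 * n + 3) / 3 := by
      rw [← coe_D_pow, pow_two, Module.End.mul_apply, D_D_extremal_zero]
    rw [hvalue]
    push_cast
    ring

/-- Second-order uniform Markov–Bernstein bound: for `d ≥ 2`, `0 < h₁ ≤ ⋯ ≤ h_d ≤ 1`
and `p ∈ P_h`, `sup_{t ≥ 0} |p''(t)| ≤ ((16d² − 24d + 11)/3) · sup_{t ≥ 0} |p(t)|`. -/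
theorem markov_bernstein_second_order (d : ℕ) (hd : 2 ≤ d)
    (h : Fin d → ℝ) (hmono : Monotone h) (hpos : ∀ i, 0 < h i) (hone : ∀ i, h i ≤ 1)
    (p : ℝ → ℝ) (hp : p ∈ expPoly d h) :
    ∀ t : ℝ, 0 ≤ t →
      |iteratedDeriv 2 p t| ≤
        ((16 * (d : ℝ) ^ 2 - 24 * (d : ℝ) + 11) / 3) * supAbs p :=
  fun _ ht => markov_bernstein_second_order_general hpos hone hp ht
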